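/- arXiv:1706.02925 — 2 statements merged into one kernel-verified Lean document; each statement's English description precedes it below -/
import Mathlib

section
/- Let a, b, c, d, e be nonzero integers and work in the rational function field ℚ(T). Set D = T^6 + 2c T^5 + (c^2 + 4b + 2d) T^4 + (2cd+2e) T^3 + (2ce + d^2) T^2 + 2deT + e^2, t₁ = -4abT^3/D, and v₁ = -T^3 t₁^2 - aT^2 t₁ + bT. Then D ≠ 0 in ℚ(T), t₁ ≠ 0, and v₁^2 = g₂(t₁), where g₂(t) = T^6 t^4 + 2a T^5 t^3 + (T^6 + 2c T^5 + (a^2 + c^2 + 2b + 2d) T^4 + (2cd+2e) T^3 + (2ce + d^2) T^2 + 2deT + e^2) t^2 + 2ab T^3 t + b^2 T^2. -/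
/-!
Write `v(t) = -T^3 t^2 - a T^2 t + b T`. Its square agrees with `g₂(t)` in the coefficients of
`t^4`, `t^3` and `1`, and the remaining terms give `g₂(t) - v(t)^2 = t * (D * t + 4abT^3)`, so
`t₁ = -4abT^3 / D` is the second root of the difference. Division by `D` is legitimate because
`D` is the image of a polynomial whose value at `0` is `e^2 ≠ 0`.
-/

/-- The point `(t₁, v₁)` constructed by Fermat's method lies on the quartic
curve `v^2 = g₂(t)` over `ℚ(T)` (proof of Theorem 1.2 of Zhang–Zargar). -/
theorem stmt8 (a b c d e : ℤ) (ha : a ≠ 0) (hb : b ≠ 0) (hc : c ≠ 0)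
    (hd : d ≠ 0) (he : e ≠ 0) :
    let T : RatFunc ℚ := RatFunc.X
    let D : RatFunc ℚ := T ^ 6 + 2 * c * T ^ 5 + (c ^ 2 + 4 * b + 2 * d) * T ^ 4
      + (2 * c * d + 2 * e) * T ^ 3 + (2 * c * e + d ^ 2) * T ^ 2
      + 2 * d * e * T + e ^ 2
    let t₁ : RatFunc ℚ := -4 * a * b * T ^ 3 / D
    let v₁ : RatFunc ℚ := -T ^ 3 * t₁ ^ 2 - a * T ^ 2 * t₁ + b * T
    D ≠ 0 ∧ t₁ ≠ 0 ∧
      v₁ ^ 2 = T ^ 6 * t₁ ^ 4 + 2 * a * T ^ 5 * t₁ ^ 3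
        + (T ^ 6 + 2 * c * T ^ 5 + (a ^ 2 + c ^ 2 + 2 * b + 2 * d) * T ^ 4
            + (2 * c * d + 2 * e) * T ^ 3 + (2 * c * e + d ^ 2) * T ^ 2
            + 2 * d * e * T + e ^ 2) * t₁ ^ 2
        + 2 * a * b * T ^ 3 * t₁ + b ^ 2 * T ^ 2 := by
  intro T D t₁ v₁
  -- `D` is a polynomial in `T` with constant term `e ^ 2`.
  have hD : D ≠ 0 := by
    let P : Polynomial ℚ := .X ^ 6 + 2 * c * .X ^ 5 + (c ^ 2 + 4 * b + 2 * d) * .X ^ 4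
      + (2 * c * d + 2 * e) * .X ^ 3 + (2 * c * e + d ^ 2) * .X ^ 2
      + 2 * d * e * .X + e ^ 2
    have hP : algebraMap (Polynomial ℚ) (RatFunc ℚ) P = D := by
      have h2 : algebraMap (Polynomial ℚ) (RatFunc ℚ) 2 = 2 := map_ofNat _ 2
      have h4 : algebraMap (Polynomial ℚ) (RatFunc ℚ) 4 = 4 := map_ofNat _ 4
      simp [P, D, T, RatFunc.algebraMap_X, h2, h4]
    have hP0 : P ≠ 0 := by
      intro h
      have h0 : P.eval 0 = (e : ℚ) ^ 2 := by simp [P]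
      rw [h, Polynomial.eval_zero] at h0
      exact pow_ne_zero 2 (Int.cast_ne_zero.mpr he) h0.symm
    rw [← hP]
    exact RatFunc.algebraMap_ne_zero hP0
  have hT : T ≠ 0 := RatFunc.X_ne_zero
  have ha' : (a : RatFunc ℚ) ≠ 0 := Int.cast_ne_zero.mpr ha
  have hb' : (b : RatFunc ℚ) ≠ 0 := Int.cast_ne_zero.mpr hb
  have ht : t₁ * D = -4 * a * b * T ^ 3 := div_mul_cancel₀ _ hD
  refine ⟨hD, ?_, ?_⟩
  · exact div_ne_zero (by simp [ha', hb', hT]) hD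
  -- The difference of the two sides is a multiple of `t₁ * D + 4abT^3`, which vanishes by `ht`.
  · simp only [v₁]
    clear_value t₁
    simp only [D] at ht
    linear_combination (-t₁) * ht
end

section
/- Let a, b, c, d, e be nonzero integers with 2a^2 e + d^2 ≠ 0 and ab + d ≠ 0. Set T₁ = -2ae(ab + d)/(2a^2 e + d^2) and y₁ = (d/a)·T₁. Then T₁ ≠ 0 and there exists a rational number z with z^2 = f(T₁)^2 + g(y₁)^2, where f(x) = (x+a)(x+b)(x+c)/x and g(y) = (y+d)(y+e)(y + cd/a)/y^2. -/
/-!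
Put `y = (d / a) T`. The factors `y + d` and `y + c d / a` are `d / a` times `T + a` and `T + c`,
so `f(T)` and `g(y)` share the factor `(T + a) (T + c) / T ^ 2`, with cofactors `T ^ 2 + b T` and
`(d / a) T + e`. It remains to make the quartic `(T ^ 2 + b T) ^ 2 + ((d / a) T + e) ^ 2` a square.
Equating it with `(T ^ 2 + b T - e) ^ 2` cancels the terms of degree 4, 3 and 0; what remains is
`T` times a linear equation, whose root is `T₁`.
-/

/-- The rational point produced in the proof of Theorem 1.4 of Zhang–Zargar
gives a rational solution of `z^2 = f(x)^2 + g(y)^2`, where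
`f(x) = (x+a)(x+b)(x+c)/x` and `g(y) = (y+d)(y+e)(y+cd/a)/y^2`. -/
theorem stmt15 (a b c d e : ℤ) (ha : a ≠ 0) (hb : b ≠ 0) (hc : c ≠ 0)
    (hd : d ≠ 0) (he : e ≠ 0) (h1 : 2 * a ^ 2 * e + d ^ 2 ≠ 0)
    (h2 : a * b + d ≠ 0) :
    let T₁ : ℚ := -2 * a * e * (a * b + d) / (2 * a ^ 2 * e + d ^ 2)
    let y₁ : ℚ := (d / a) * T₁
    T₁ ≠ 0 ∧
      ∃ z : ℚ, z ^ 2 = ((T₁ + a) * (T₁ + b) * (T₁ + c) / T₁) ^ 2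
        + ((y₁ + d) * (y₁ + e) * (y₁ + c * d / a) / y₁ ^ 2) ^ 2 := by
  intro T y
  have ha' : (a : ℚ) ≠ 0 := by exact_mod_cast ha
  have hd' : (d : ℚ) ≠ 0 := by exact_mod_cast hd
  have he' : (e : ℚ) ≠ 0 := by exact_mod_cast he
  have h1' : (2 * a ^ 2 * e + d ^ 2 : ℚ) ≠ 0 := by exact_mod_cast h1
  have h2' : (a * b + d : ℚ) ≠ 0 := by exact_mod_cast h2
  have hT : T ≠ 0 :=
    div_ne_zero (mul_ne_zero (mul_ne_zero (mul_ne_zero (by norm_num) ha') he') h2') h1'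
  have hlin : T * (2 * a ^ 2 * e + d ^ 2) = -2 * a * e * (a * b + d) := div_mul_cancel₀ _ h1'
  have hy : y = (d / a) * T := rfl
  clear_value y T
  subst hy
  refine ⟨hT, (T + a) * (T + c) * (T ^ 2 + b * T - e) / T ^ 2, ?_⟩
  have hg : ((d / a) * T + d) * ((d / a) * T + e) * ((d / a) * T + c * d / a) / ((d / a) * T) ^ 2
      = (T + a) * (T + c) * ((d / a) * T + e) / T ^ 2 := by
    field_simp
  have hf : (T + a) * (T + b) * (T + c) / T = (T + a) * (T + c) * (T ^ 2 + b * T) / T ^ 2 := by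
    field_simp
  have hq : (T ^ 2 + b * T - e) ^ 2 = (T ^ 2 + b * T) ^ 2 + ((d / a) * T + e) ^ 2 := by
    field_simp
    linear_combination (-T) * hlin
  rw [hg, hf, div_pow, div_pow, div_pow, ← add_div, mul_pow _ (T ^ 2 + b * T - e), hq]
  ring
end
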